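/- arXiv:2307.14431 — 3 statements merged into one kernel-verified Lean document; each statement's English description precedes it below -/
import Mathlib

section
/- Let S be a ring (not necessarily unital) and let U be a set of local units for S. Then the corner uSu is a Baer ring for every u ∈ U if and only if S is locally Baer (i.e., the corner eSe is a Baer ring for every idempotent e ∈ S). -/
/-- The corner `eSe = {exe : x ∈ S}` of a ring. -/
def corner {S : Type*} [NonUnitalRing S] (e : S) : Set S :=
  Set.range fun y => e * y * e

/-- `U` is a set of local units for `S`: a set of idempotents such that every finite
subset of `S` admits a unit from `U`. -/
def IsLocalUnits {S : Type*} [NonUnitalRing S] (U : Set S) : Prop :=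
  (∀ u ∈ U, IsIdempotentElem u) ∧
    ∀ T : Finset S, ∃ u ∈ U, ∀ s ∈ T, u * s = s ∧ s * u = s

/-- The corner `eSe` (a unital ring with identity `e`) is a Baer ring: for every
subset `B` of `eSe`, the left annihilator of `B` in `eSe` equals `(eSe)f` for some
idempotent `f ∈ eSe`, and the right annihilator of `B` in `eSe` equals `g(eSe)` for
some idempotent `g ∈ eSe`. -/
def IsBaerCorner {S : Type*} [NonUnitalRing S] (e : S) : Prop :=
  ∀ B ⊆ corner e,
    (∃ f ∈ corner e, IsIdempotentElem f ∧
      {x | x ∈ corner e ∧ ∀ b ∈ B, x * b = 0} = {x | ∃ y ∈ corner e, x = y * f}) ∧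
    (∃ g ∈ corner e, IsIdempotentElem g ∧
      {x | x ∈ corner e ∧ ∀ b ∈ B, b * x = 0} = {x | ∃ y ∈ corner e, x = g * y})

/-!
Baerness of a corner is left-right symmetric: if `r(B)` is the right annihilator of `B` in `eSe` and
`f` is an idempotent generating the left annihilator of `r(B)`, then `e - f` generates `r(B)`. So it
suffices to produce idempotent generators of left annihilators. If `e ∈ uSu` and `f` generates the
left annihilator in `uSu` of some `B ⊆ eSe`, then `u - e` annihilates `B`, so `(u - e)f = u - e`;
hence `fe = efe`, and this idempotent of `eSe` generates the left annihilator of `B` in `eSe`.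
-/

section Corner

variable {S : Type*} [NonUnitalRing S] {e u f x y : S} {B : Set S}

lemma mem_corner_iff (he : IsIdempotentElem e) : x ∈ corner e ↔ e * x = x ∧ x * e = x :=
  Subsemigroup.mem_corner_iff he

lemma mul_mem_corner (hx : x ∈ corner e) (hy : y ∈ corner e) : x * y ∈ corner e :=
  mul_mem (s := NonUnitalRing.corner e) hx hy

lemma sub_mem_corner (hx : x ∈ corner e) (hy : y ∈ corner e) : x - y ∈ corner e :=
  sub_mem (H := NonUnitalRing.corner e) hx hy

lemma self_mem_corner (he : IsIdempotentElem e) : e ∈ corner e :=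
  (mem_corner_iff he).2 ⟨he, he⟩

lemma corner_subset_corner (heu : e ∈ corner u) : corner e ⊆ corner u := by
  obtain ⟨z, rfl⟩ := heu
  rintro _ ⟨x, rfl⟩
  exact ⟨z * u * x * u * z, by simp only [mul_assoc]⟩

/-- `f` is an idempotent of the corner `eSe` generating the left annihilator of `B` in `eSe` as a
left ideal. Membership of `x` in `(eSe)f` is encoded as `x * f = x`. -/
structure IsLeftAnnihilatorGenerator (e : S) (B : Set S) (f : S) : Prop where
  mem_corner : f ∈ corner e
  isIdempotentElem : IsIdempotentElem f
  annihilates_iff : ∀ x ∈ corner e, (∀ b ∈ B, x * b = 0) ↔ x * f = x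

lemma isLeftAnnihilatorGenerator_iff :
    IsLeftAnnihilatorGenerator e B f ↔ f ∈ corner e ∧ IsIdempotentElem f ∧
      {x | x ∈ corner e ∧ ∀ b ∈ B, x * b = 0} = {x | ∃ y ∈ corner e, x = y * f} := by
  have mem_iff (hf : f ∈ corner e) (hff : IsIdempotentElem f) (x : S) :
      (∃ y ∈ corner e, x = y * f) ↔ x ∈ corner e ∧ x * f = x := by
    constructor
    · rintro ⟨y, hy, rfl⟩
      exact ⟨mul_mem_corner hy hf, by rw [mul_assoc, hff.eq]⟩
    · rintro ⟨hx, hxf⟩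
      exact ⟨x, hx, hxf.symm⟩
  constructor
  · rintro ⟨hf, hff, h⟩
    refine ⟨hf, hff, Set.ext fun x ↦ ?_⟩
    simp only [Set.mem_ofPred_eq, mem_iff hf hff]
    exact and_congr_right (h x)
  · rintro ⟨hf, hff, h⟩
    refine ⟨hf, hff, fun x hx ↦ ?_⟩
    simpa only [Set.mem_ofPred_eq, mem_iff hf hff, hx, true_and] using Set.ext_iff.1 h x

namespace IsLeftAnnihilatorGenerator

lemma mul_eq_zero (hf : IsLeftAnnihilatorGenerator e B f) {b : S} (hb : b ∈ B) : f * b = 0 :=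
  (hf.annihilates_iff f hf.mem_corner).2 hf.isIdempotentElem b hb

lemma mul_of_mem_corner (hu : IsIdempotentElem u) (he : IsIdempotentElem e) (heu : e ∈ corner u)
    (hB : B ⊆ corner e) (hf : IsLeftAnnihilatorGenerator u B f) :
    IsLeftAnnihilatorGenerator e B (f * e) := by
  have eb_eq {b : S} (hb : b ∈ B) : e * b = b := ((mem_corner_iff he).1 (hB hb)).1
  have sub_mul_f : (u - e) * f = u - e := by
    refine (hf.annihilates_iff _ (sub_mem_corner (self_mem_corner hu) heu)).1 fun b hb ↦ ?_
    have ub_eq : u * b = b := ((mem_corner_iff hu).1 (corner_subset_corner heu (hB hb))).1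
    rw [sub_mul, ub_eq, eb_eq hb, sub_self]
  have efe_eq : e * (f * e) = f * e := by
    have uf_eq : u * f = f := ((mem_corner_iff hu).1 hf.mem_corner).1
    have ue_eq : u * e = e := ((mem_corner_iff hu).1 heu).1
    have : f * e - e * (f * e) = 0 := by
      calc f * e - e * (f * e) = (u - e) * f * e := by rw [sub_mul, uf_eq, sub_mul, mul_assoc]
        _ = 0 := by rw [sub_mul_f, sub_mul, ue_eq, he.eq, sub_self]
    exact (sub_eq_zero.1 this).symm
  refine ⟨(mem_corner_iff he).2 ⟨efe_eq, by rw [mul_assoc, he.eq]⟩, ?_, fun x hx ↦ ⟨?_, ?_⟩⟩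
  · rw [IsIdempotentElem, mul_assoc, efe_eq, ← mul_assoc, hf.isIdempotentElem.eq]
  · intro hxB
    have xf_eq : x * f = x := (hf.annihilates_iff x (corner_subset_corner heu hx)).1 hxB
    rw [← mul_assoc, xf_eq, ((mem_corner_iff he).1 hx).2]
  · intro hxfe b hb
    rw [← hxfe, mul_assoc, mul_assoc, eb_eq hb, hf.mul_eq_zero hb, mul_zero]

lemma rightAnnihilator_eq (he : IsIdempotentElem e) (hB : B ⊆ corner e)
    (hf : IsLeftAnnihilatorGenerator e {x | x ∈ corner e ∧ ∀ b ∈ B, b * x = 0} f) :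
    {x | x ∈ corner e ∧ ∀ b ∈ B, b * x = 0} = {x | ∃ y ∈ corner e, x = (e - f) * y} := by
  ext x
  constructor
  · intro hx
    refine ⟨x, hx.1, ?_⟩
    rw [sub_mul, hf.mul_eq_zero hx, sub_zero, ((mem_corner_iff he).1 hx.1).1]
  · rintro ⟨y, hy, rfl⟩
    refine ⟨mul_mem_corner (sub_mem_corner (self_mem_corner he) hf.mem_corner) hy, fun b hb ↦ ?_⟩
    have be_eq : b * e = b := ((mem_corner_iff he).1 (hB hb)).2
    have bf_eq : b * f = b := (hf.annihilates_iff b (hB hb)).1 fun x hx ↦ hx.2 b hb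
    rw [← mul_assoc, mul_sub, be_eq, bf_eq, sub_self, zero_mul]

end IsLeftAnnihilatorGenerator

lemma isBaerCorner_iff_forall_exists_isLeftAnnihilatorGenerator (he : IsIdempotentElem e) :
    IsBaerCorner e ↔ ∀ B ⊆ corner e, ∃ f, IsLeftAnnihilatorGenerator e B f := by
  simp only [isLeftAnnihilatorGenerator_iff]
  refine ⟨fun h B hB ↦ (h B hB).1, fun h B hB ↦ ⟨h B hB, ?_⟩⟩
  obtain ⟨f, hf⟩ := h {x | x ∈ corner e ∧ ∀ b ∈ B, b * x = 0} fun x hx ↦ hx.1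
  rw [← isLeftAnnihilatorGenerator_iff] at hf
  obtain ⟨ef_eq, fe_eq⟩ := (mem_corner_iff he).1 hf.mem_corner
  exact ⟨e - f, sub_mem_corner (self_mem_corner he) hf.mem_corner,
    hf.isIdempotentElem.sub he fe_eq ef_eq, hf.rightAnnihilator_eq he hB⟩

lemma IsBaerCorner.of_mem_corner (hu : IsIdempotentElem u) (he : IsIdempotentElem e)
    (heu : e ∈ corner u) (h : IsBaerCorner u) : IsBaerCorner e := by
  rw [isBaerCorner_iff_forall_exists_isLeftAnnihilatorGenerator hu] at h
  rw [isBaerCorner_iff_forall_exists_isLeftAnnihilatorGenerator he]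
  intro B hB
  obtain ⟨f, hf⟩ := h B (hB.trans (corner_subset_corner heu))
  exact ⟨f * e, hf.mul_of_mem_corner hu he heu hB⟩

lemma IsLocalUnits.exists_mem_corner {U : Set S} (hU : IsLocalUnits U) (x : S) :
    ∃ u ∈ U, x ∈ corner u := by
  obtain ⟨u, hu, hux⟩ := hU.2 {x}
  exact ⟨u, hu, (mem_corner_iff (hU.1 u hu)).2 (hux x (Finset.mem_singleton_self x))⟩

end Corner

theorem stmt_1_general {S : Type*} [NonUnitalRing S] (U : Set S)
    (hU : ∀ u ∈ U, IsIdempotentElem u)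
    (hcover : ∀ e : S, IsIdempotentElem e → ∃ u ∈ U, e ∈ corner u) :
    (∀ u ∈ U, IsBaerCorner u) ↔ ∀ e : S, IsIdempotentElem e → IsBaerCorner e := by
  refine ⟨fun h e he ↦ ?_, fun h u hu ↦ h u (hU u hu)⟩
  obtain ⟨u, hu, heu⟩ := hcover e he
  exact (h u hu).of_mem_corner (hU u hu) he heu

/-- If `U` is a set of local units for `S`, then `uSu` is a Baer ring for every
`u ∈ U` iff `S` is locally Baer, i.e. `eSe` is a Baer ring for every idempotent
`e ∈ S`. -/
theorem stmt_1 {S : Type*} [NonUnitalRing S] (U : Set S) (hU : IsLocalUnits U) :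
    (∀ u ∈ U, IsBaerCorner u) ↔ ∀ e : S, IsIdempotentElem e → IsBaerCorner e :=
  stmt_1_general U hU.1 fun e _ ↦ hU.exists_mem_corner e
end

section
/- Let n ∈ ℕ and let S₁, …, Sₙ be rings (not necessarily unital). The direct product S = Π_{i=1}^n S_i is locally Baer if and only if each S_i is locally Baer. -/
/-- A ring is locally Baer if the corner `eSe` is a Baer ring for every idempotent
`e ∈ S`. -/
def IsLocallyBaer (S : Type*) [NonUnitalRing S] : Prop :=
  ∀ e : S, IsIdempotentElem e → IsBaerCorner e

/-!
Corners, annihilators in corners and principal ideals of corners of a direct product are all boxes,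
i.e. products of the corresponding sets in the factors. A box of nonempty sets determines its sides,
so the Baer condition for a subset `B` of the product amounts to the Baer conditions for all
coordinate projections of `B`, and hence a corner of the product is Baer iff all its coordinate
corners are. Every idempotent of a factor is a coordinate of an idempotent of the product, namely
the one which vanishes at all other coordinates.
-/

theorem univ_pi_inj_of_nonempty {ι : Type*} {α : ι → Type*} {s t : ∀ i, Set (α i)}
    (hs : ∀ i, (s i).Nonempty) :
    Set.univ.pi s = Set.univ.pi t ↔ ∀ i, s i = t i := by
  refine ⟨fun h i => ?_, fun h => congrArg Set.univ.pi (funext h)⟩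
  have hs' : (Set.univ.pi s).Nonempty := Set.univ_pi_nonempty_iff.2 hs
  rw [← Set.eval_image_univ_pi hs', h, Set.eval_image_univ_pi (h ▸ hs')]

theorem isIdempotentElem_pi_iff {ι : Type*} {M : ι → Type*} [∀ i, Mul (M i)] {e : ∀ i, M i} :
    IsIdempotentElem e ↔ ∀ i, IsIdempotentElem (e i) :=
  funext_iff

theorem isIdempotentElem_piSingle {ι : Type*} [DecidableEq ι] {M : ι → Type*}
    [∀ i, MulZeroClass (M i)] {i : ι} {e : M i} (he : IsIdempotentElem e) :
    IsIdempotentElem (Pi.single i e : ∀ j, M j) := by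
  rw [IsIdempotentElem, ← Pi.single_mul, he.eq]

namespace corner

section Ring

variable {R : Type*} [NonUnitalRing R]

/-- The left annihilator of `B` in the corner `eRe`. -/
def leftAnnihilator (e : R) (B : Set R) : Set R :=
  {x | x ∈ corner e ∧ ∀ b ∈ B, x * b = 0}

/-- The right annihilator of `B` in the corner `eRe`. -/
def rightAnnihilator (e : R) (B : Set R) : Set R :=
  {x | x ∈ corner e ∧ ∀ b ∈ B, b * x = 0}

/-- The set `(eRe)f`; for `f ∈ eRe` it is the principal left ideal of `eRe` generated by `f`. -/
def leftMultiples (e f : R) : Set R :=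
  {x | ∃ y ∈ corner e, x = y * f}

/-- The set `g(eRe)`; for `g ∈ eRe` it is the principal right ideal of `eRe` generated by `g`. -/
def rightMultiples (e g : R) : Set R :=
  {x | ∃ y ∈ corner e, x = g * y}

/-- The Baer condition on a single set `B`: both annihilators of `B` in the corner `eRe` are
principal one-sided ideals generated by idempotents of `eRe`. -/
def HasIdempotentAnnihilators (e : R) (B : Set R) : Prop :=
  (∃ f ∈ corner e, IsIdempotentElem f ∧ leftAnnihilator e B = leftMultiples e f) ∧
    ∃ g ∈ corner e, IsIdempotentElem g ∧ rightAnnihilator e B = rightMultiples e g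

theorem isBaerCorner_iff {e : R} :
    IsBaerCorner e ↔ ∀ B ⊆ corner e, HasIdempotentAnnihilators e B :=
  Iff.rfl

theorem zero_mem (e : R) : 0 ∈ corner e :=
  ⟨0, by simp only [mul_zero, zero_mul]⟩

theorem leftAnnihilator_nonempty (e : R) (B : Set R) : (leftAnnihilator e B).Nonempty :=
  ⟨0, zero_mem e, fun b _ => zero_mul b⟩

theorem rightAnnihilator_nonempty (e : R) (B : Set R) : (rightAnnihilator e B).Nonempty :=
  ⟨0, zero_mem e, fun b _ => mul_zero b⟩

end Ring

section Pi

variable {ι : Type*} {S : ι → Type*} [∀ i, NonUnitalRing (S i)]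

theorem eq_univ_pi (e : ∀ i, S i) : corner e = Set.univ.pi fun i => corner (e i) :=
  Set.range_piMap fun i (y : S i) => e i * y * e i

theorem mem_pi_iff {e x : ∀ i, S i} : x ∈ corner e ↔ ∀ i, x i ∈ corner (e i) := by
  rw [eq_univ_pi, Set.mem_univ_pi]

theorem single_mem [DecidableEq ι] {e : ∀ i, S i} {i : ι} {x : S i} (hx : x ∈ corner (e i)) :
    Pi.single i x ∈ corner e := by
  obtain ⟨y, rfl⟩ := hx
  exact ⟨Pi.single i y, by simp only [Pi.single_mul_left, Pi.single_mul_right]⟩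

theorem leftAnnihilator_eq_univ_pi (e : ∀ i, S i) (B : Set (∀ i, S i)) :
    leftAnnihilator e B =
      Set.univ.pi fun i => leftAnnihilator (e i) (Function.eval i '' B) := by
  ext x
  simp only [leftAnnihilator, Set.mem_ofPred_eq, Set.mem_univ_pi, Set.forall_mem_image, mem_pi_iff,
    funext_iff, forall_and]
  exact and_congr_right fun _ => ⟨fun h i b hb => h b hb i, fun h b hb i => h i hb⟩

theorem rightAnnihilator_eq_univ_pi (e : ∀ i, S i) (B : Set (∀ i, S i)) :
    rightAnnihilator e B =
      Set.univ.pi fun i => rightAnnihilator (e i) (Function.eval i '' B) := by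
  ext x
  simp only [rightAnnihilator, Set.mem_ofPred_eq, Set.mem_univ_pi, Set.forall_mem_image, mem_pi_iff,
    funext_iff, forall_and]
  exact and_congr_right fun _ => ⟨fun h i b hb => h b hb i, fun h b hb i => h i hb⟩

theorem leftMultiples_eq_univ_pi (e f : ∀ i, S i) :
    leftMultiples e f = Set.univ.pi fun i => leftMultiples (e i) (f i) := by
  ext x
  simp only [leftMultiples, Set.mem_ofPred_eq, Set.mem_univ_pi, mem_pi_iff, funext_iff,
    Pi.mul_apply, Classical.skolem, forall_and]

theorem rightMultiples_eq_univ_pi (e g : ∀ i, S i) :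
    rightMultiples e g = Set.univ.pi fun i => rightMultiples (e i) (g i) := by
  ext x
  simp only [rightMultiples, Set.mem_ofPred_eq, Set.mem_univ_pi, mem_pi_iff, funext_iff,
    Pi.mul_apply, Classical.skolem, forall_and]

theorem leftAnnihilator_eq_leftMultiples_pi_iff {e f : ∀ i, S i} {B : Set (∀ i, S i)} :
    leftAnnihilator e B = leftMultiples e f ↔
      ∀ i, leftAnnihilator (e i) (Function.eval i '' B) = leftMultiples (e i) (f i) := by
  rw [leftAnnihilator_eq_univ_pi, leftMultiples_eq_univ_pi,
    univ_pi_inj_of_nonempty fun i => leftAnnihilator_nonempty (e i) _]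

theorem rightAnnihilator_eq_rightMultiples_pi_iff {e g : ∀ i, S i} {B : Set (∀ i, S i)} :
    rightAnnihilator e B = rightMultiples e g ↔
      ∀ i, rightAnnihilator (e i) (Function.eval i '' B) = rightMultiples (e i) (g i) := by
  rw [rightAnnihilator_eq_univ_pi, rightMultiples_eq_univ_pi,
    univ_pi_inj_of_nonempty fun i => rightAnnihilator_nonempty (e i) _]

theorem hasIdempotentAnnihilators_pi_iff {e : ∀ i, S i} {B : Set (∀ i, S i)} :
    HasIdempotentAnnihilators e B ↔
      ∀ i, HasIdempotentAnnihilators (e i) (Function.eval i '' B) := by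
  simp only [HasIdempotentAnnihilators, mem_pi_iff, isIdempotentElem_pi_iff,
    leftAnnihilator_eq_leftMultiples_pi_iff, rightAnnihilator_eq_rightMultiples_pi_iff,
    Classical.skolem, forall_and]

theorem isBaerCorner_pi_iff {e : ∀ i, S i} : IsBaerCorner e ↔ ∀ i, IsBaerCorner (e i) := by
  classical
  simp only [isBaerCorner_iff]
  constructor
  · intro h i B hB
    have hsingle : Pi.single i '' B ⊆ corner e :=
      Set.image_subset_iff.2 fun b hb => single_mem (hB hb)
    have heval : Function.eval i '' (Pi.single i '' B : Set (∀ j, S j)) = B := by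
      simp only [Set.image_image, Function.eval, Pi.single_eq_same, Set.image_id']
    exact heval ▸ hasIdempotentAnnihilators_pi_iff.1 (h _ hsingle) i
  · intro h B hB
    exact hasIdempotentAnnihilators_pi_iff.2 fun i =>
      h i _ (Set.image_subset_iff.2 fun b hb => mem_pi_iff.1 (hB hb) i)

end Pi

end corner

theorem stmt_8_general {ι : Type*} (S : ι → Type*) [∀ i, NonUnitalRing (S i)] :
    IsLocallyBaer (∀ i, S i) ↔ ∀ i, IsLocallyBaer (S i) := by
  classical
  constructor
  · intro h i e he
    have hcoord := corner.isBaerCorner_pi_iff.1 (h (Pi.single i e) (isIdempotentElem_piSingle he)) i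
    rwa [Pi.single_eq_same] at hcoord
  · intro h e he
    exact corner.isBaerCorner_pi_iff.2 fun i => h i (e i) (isIdempotentElem_pi_iff.1 he i)

/-- A finite direct product of rings is locally Baer iff each factor is. -/
theorem stmt_8 (n : ℕ) (S : Fin n → Type*) [∀ i, NonUnitalRing (S i)] :
    IsLocallyBaer (∀ i, S i) ↔ ∀ i, IsLocallyBaer (S i) :=
  stmt_8_general S
end

section
/- Let V be a countable set and let 𝒜 be a collection of subsets of V that is closed under finite unions, finite intersections, and relative complements. Let n ∈ ℕ, let X₁, …, Xₙ ∈ 𝒜, let S ⊆ V, and let A ∈ 𝒜 be such that A ∩ S and A \ S are infinite and A ∩ S ∉ 𝒜. Then there exist elements s ∈ A ∩ S and t ∈ A \ S such that for every i ∈ {1, …, n}, s ∈ X_i if and only if t ∈ X_i. -/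
/-!
Sort the points of `A` by which of the sets `X i` they belong to. Each of the finitely many classes
is a Boolean combination of `A` and the `X i`, hence lies in the ring `𝒜`, and so does every union
of classes. If no point of `A ∩ S` were indistinguishable from a point of `A \ S`, then `A ∩ S`
would be such a union.
-/

open MeasureTheory

section MemPattern

variable {V ι : Type*} {X : ι → Set V} {S A : Set V}

/-- The membership pattern of a point `v` with respect to a family of sets `X`: the set of indices
of the members of the family that contain `v`. Its fibres are the classes of points that the family
does not distinguish. -/
def memPattern (X : ι → Set V) (v : V) : Set ι :=
  {i | v ∈ X i}

theorem memPattern_eq_iff {s t : V} :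
    memPattern X s = memPattern X t ↔ ∀ i, s ∈ X i ↔ t ∈ X i :=
  Set.ext_iff

theorem memPattern_preimage_singleton (I : Set ι) :
    memPattern X ⁻¹' {I} = ⋂ i, {v | v ∈ X i ↔ i ∈ I} := by
  ext v
  simp only [Set.mem_preimage, Set.mem_singleton_iff, Set.mem_iInter, Set.ext_iff, memPattern,
    Set.mem_ofPred_eq]

section IsSetAlgebra

variable [Finite ι] {ℬ : Set (Set V)}

theorem memPattern_preimage_singleton_mem (hℬ : IsSetAlgebra ℬ) (hX : ∀ i, X i ∈ ℬ) (I : Set ι) :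
    memPattern X ⁻¹' {I} ∈ ℬ := by
  cases nonempty_fintype ι
  have mem_literal (i : ι) : {v | v ∈ X i ↔ i ∈ I} ∈ ℬ := by
    by_cases hi : i ∈ I
    · simpa only [hi, iff_true, Set.ofPred_mem_eq] using hX i
    · simpa only [hi, iff_false, Set.compl_def] using hℬ.compl_mem (hX i)
  rw [memPattern_preimage_singleton]
  simpa only [Finset.mem_univ, Set.iInter_true] using
    hℬ.biInter_mem Finset.univ fun i _ => mem_literal i

theorem memPattern_preimage_mem (hℬ : IsSetAlgebra ℬ) (hX : ∀ i, X i ∈ ℬ) (P : Set (Set ι)) :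
    memPattern X ⁻¹' P ∈ ℬ := by
  rw [← Set.biUnion_preimage_singleton]
  simpa only [Set.Finite.mem_toFinset] using
    hℬ.biUnion_mem P.toFinite.toFinset fun I _ => memPattern_preimage_singleton_mem hℬ hX I

end IsSetAlgebra

section IsSetRing

variable {𝒜 : Set (Set V)}

theorem isSetRing_of_nonempty (hne : 𝒜.Nonempty)
    (hunion : ∀ A ∈ 𝒜, ∀ B ∈ 𝒜, A ∪ B ∈ 𝒜) (hdiff : ∀ A ∈ 𝒜, ∀ B ∈ 𝒜, A \ B ∈ 𝒜) :
    IsSetRing 𝒜 where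
  empty_mem := by
    obtain ⟨A, hA⟩ := hne
    simpa only [Set.sdiff_self] using hdiff A hA A hA
  union_mem B C hB hC := hunion B hB C hC
  sdiff_mem B C hB hC := hdiff B hB C hC

theorem isSetAlgebra_setOf_inter_mem (h𝒜 : IsSetRing 𝒜) (hA : A ∈ 𝒜) :
    IsSetAlgebra {B | A ∩ B ∈ 𝒜} where
  empty_mem := by simpa only [Set.mem_ofPred_eq, Set.inter_empty] using h𝒜.empty_mem
  compl_mem B hB := by
    simpa only [Set.mem_ofPred_eq, Set.sdiff_self_inter, ← Set.sdiff_eq] using h𝒜.sdiff_mem hA hB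
  union_mem B C hB hC := by
    simpa only [Set.mem_ofPred_eq, Set.inter_union_distrib_left] using h𝒜.union_mem hB hC

theorem inter_memPattern_preimage_mem [Finite ι] (h𝒜 : IsSetRing 𝒜) (hX : ∀ i, X i ∈ 𝒜)
    (hA : A ∈ 𝒜) (P : Set (Set ι)) : A ∩ memPattern X ⁻¹' P ∈ 𝒜 :=
  memPattern_preimage_mem (isSetAlgebra_setOf_inter_mem h𝒜 hA)
    (fun i => h𝒜.inter_mem hA (hX i)) P

theorem stmt_16_general [Finite ι] (h𝒜 : IsSetRing 𝒜) (hX : ∀ i, X i ∈ 𝒜) (hA : A ∈ 𝒜)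
    (hnot : A ∩ S ∉ 𝒜) : ∃ s ∈ A ∩ S, ∃ t ∈ A \ S, ∀ i, s ∈ X i ↔ t ∈ X i := by
  by_contra hdist
  suffices hsat : A ∩ S = A ∩ memPattern X ⁻¹' (memPattern X '' (A ∩ S)) from
    hnot (hsat ▸ inter_memPattern_preimage_mem h𝒜 hX hA _)
  refine Set.Subset.antisymm
    (Set.subset_inter Set.inter_subset_left (Set.subset_preimage_image _ _)) ?_
  rintro t ⟨htA, s, hs, hst⟩
  refine ⟨htA, by_contra fun htS => hdist ?_⟩
  exact ⟨s, hs, t, ⟨htA, htS⟩, memPattern_eq_iff.mp hst⟩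

end IsSetRing

end MemPattern

/-- Lemma 6.1 (indistinguishability): let `V` be a countable vertex set and `𝒜` a
collection of subsets of `V` closed under finite unions, finite intersections and
relative complements. Given `X₁, …, Xₙ ∈ 𝒜`, a set `S ⊆ V`, and `A ∈ 𝒜` with
`A ∩ S` and `A \ S` infinite and `A ∩ S ∉ 𝒜`, there are `s ∈ A ∩ S` and
`t ∈ A \ S` lying in exactly the same sets `X i`. -/
theorem stmt_16 {V : Type*} [Countable V] (𝒜 : Set (Set V))
    (hunion : ∀ A ∈ 𝒜, ∀ B ∈ 𝒜, A ∪ B ∈ 𝒜)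
    (hinter : ∀ A ∈ 𝒜, ∀ B ∈ 𝒜, A ∩ B ∈ 𝒜)
    (hdiff : ∀ A ∈ 𝒜, ∀ B ∈ 𝒜, A \ B ∈ 𝒜)
    (n : ℕ) (X : Fin n → Set V) (hX : ∀ i, X i ∈ 𝒜)
    (S : Set V) (A : Set V) (hA : A ∈ 𝒜)
    (hAS : (A ∩ S).Infinite) (hAS' : (A \ S).Infinite)
    (hnot : A ∩ S ∉ 𝒜) :
    ∃ s ∈ A ∩ S, ∃ t ∈ A \ S, ∀ i, s ∈ X i ↔ t ∈ X i := by
  exact stmt_16_general (isSetRing_of_nonempty ⟨A, hA⟩ hunion hdiff) hX hA hnot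
end
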